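/- arXiv:2601.07427 — 2 statements merged into one kernel-verified Lean document; each statement's English description precedes it below -/
import Mathlib

section
/- GME negativity of isotropic pair-entangled states on tree networks: let G = (V, E) be a finite tree with at least one edge, fix for each edge an orientation so that for edge e = (u, v) the first ℂ^d factor is owned by u and the second by v. For 0 ≤ p ≤ 1, let ρ = ⊗_{e∈E} (p·Φ_e + ((1−p)/d²)·I_e), a state on the total space, and let W_E = −d · ⊗_{e∈E} Φ_e + ((d+1)^{1−|E|}/2) · ⊗_{e∈E} (I_e + d·Φ_e). Then N(ρ) = max{0, −Tr(W_E ρ)}. -/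
open Matrix Finset
open scoped ComplexOrder
open Classical

/-- The projector onto the maximally entangled state on `ℂ^d ⊗ ℂ^d`. -/
noncomputable def phiM (d : ℕ) : Matrix (Fin d × Fin d) (Fin d × Fin d) ℂ :=
  Matrix.of fun p q => if p.1 = p.2 ∧ q.1 = q.2 then (1 : ℂ) / d else 0

/-- The absolute value of the sum of the negative eigenvalues of a matrix
(zero if the matrix is not Hermitian). -/
noncomputable def negSum {n : Type*} [Fintype n] [DecidableEq n]
    (M : Matrix n n ℂ) : ℝ :=
  if h : M.IsHermitian then
    |∑ i ∈ Finset.univ.filter (fun i => h.eigenvalues i < 0), h.eigenvalues i|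
  else 0

/-- A quantum state: positive semidefinite with unit trace. -/
def IsState {n : Type*} [Fintype n] (ρ : Matrix n n ℂ) : Prop :=
  ρ.PosSemidef ∧ ρ.trace = 1

/-- `Γ_S` on a quantum network: given an orientation `orient` assigning to each edge its two
endpoints (owner of the first and of the second `ℂ^d` factor), the partial transpose of all
factors owned by vertices in `S`. -/
def ptParty {V : Type*} [DecidableEq V] (E : Type*) (orient : E → V × V) (S : Finset V)
    (M : Matrix (E → Fin d × Fin d) (E → Fin d × Fin d) ℂ) :
    Matrix (E → Fin d × Fin d) (E → Fin d × Fin d) ℂ :=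
  Matrix.of fun x y =>
    M (fun e => (if (orient e).1 ∈ S then (y e).1 else (x e).1,
                 if (orient e).2 ∈ S then (y e).2 else (x e).2))
      (fun e => (if (orient e).1 ∈ S then (x e).1 else (y e).1,
                 if (orient e).2 ∈ S then (x e).2 else (y e).2))

/-- The GME negativity of a network state: infimum over all finite decompositions
`ρ = Σ p_S ρ_S` (each term labelled by a nonempty proper subset `S ⊂ V`, `p_S ≥ 0`, each
`ρ_S` a state) of `Σ p_S N_S(ρ_S)`. -/
noncomputable def GMEnegNet {V : Type*} [Fintype V] [DecidableEq V] (d : ℕ) (E : Type*)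
    [Fintype E] [DecidableEq E] (orient : E → V × V)
    (ρ : Matrix (E → Fin d × Fin d) (E → Fin d × Fin d) ℂ) : ℝ :=
  sInf {r : ℝ | ∃ (m : ℕ) (S : Fin m → Finset V) (p : Fin m → ℝ)
      (σ : Fin m → Matrix (E → Fin d × Fin d) (E → Fin d × Fin d) ℂ),
      (∀ k, (S k).Nonempty) ∧ (∀ k, S k ≠ Finset.univ) ∧ (∀ k, 0 ≤ p k) ∧
      (∀ k, IsState (σ k)) ∧ ρ = ∑ k, (p k : ℂ) • σ k ∧
      r = ∑ k, p k * negSum (ptParty E orient (S k) (σ k))}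

/-- The `E`-SSW: `W_E = −d·⊗_{e∈E} Φ_e + ((d+1)^{1−|E|}/2)·⊗_{e∈E}(I_e + d·Φ_e)`. -/
noncomputable def WE (d : ℕ) (E : Type*) [Fintype E] [DecidableEq E] :
    Matrix (E → Fin d × Fin d) (E → Fin d × Fin d) ℂ :=
  (-(d : ℂ)) • Matrix.of (fun x y => ∏ e, phiM d (x e) (y e))
    + ((((d : ℂ) + 1) ^ ((1 : ℤ) - (Fintype.card E : ℤ)) / 2)) •
      Matrix.of (fun x y => ∏ e, ((1 : Matrix (Fin d × Fin d) (Fin d × Fin d) ℂ)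
        + (d : ℂ) • phiM d) (x e) (y e))

/-- The isotropic pair-entangled network state `⊗_{e∈E} (p·Φ + ((1−p)/d²)·I)`. -/
noncomputable def ipen (d : ℕ) (E : Type*) [Fintype E] [DecidableEq E] (p : ℝ) :
    Matrix (E → Fin d × Fin d) (E → Fin d × Fin d) ℂ :=
  Matrix.of fun x y => ∏ e,
    ((p : ℂ) • phiM d + ((1 - (p : ℂ)) / (d : ℂ) ^ 2) •
      (1 : Matrix (Fin d × Fin d) (Fin d × Fin d) ℂ)) (x e) (y e)

/-!
Lower bound. If the edge `e₀` crosses the cut `S`, splitting off the factor at `e₀` writes `W_E` as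
`P + T` with `P ≥ 0` and `0 ≤ T^Γ_S ≤ 1`, whence `-Tr(W_E σ) ≤ -Tr(T^Γ_S σ^Γ_S) ≤ N_S(σ)` for every
state `σ`. By connectedness every nonempty proper `S` is crossed by some edge.

Upper bound. The state `ρ` is a mixture of the product states `ζ_B`, `B ⊆ E`, with factor
`(1 - Φ) / (d² - 1)` on the edges in `B` and `Φ` elsewhere. In a tree every `B` is the set of edges
crossing some cut. Across that cut, `ζ_B` with `B ≠ ∅` can absorb `ζ_∅` up to the weight
`κ_B = (d + 1)^(1 - |B|) / (d - 1)` while keeping a positive partial transpose, hence at no cost;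
what is left of `ζ_∅` costs `(d - 1) / 2` per unit of weight across a cut with a single edge. As
`Tr(W_E ζ_B) = κ_B (d - 1) / 2` for `B ≠ ∅` and `Tr(W_E ζ_∅) = -(d - 1) / 2`, the total is
`max {0, -Tr(W_E ρ)}`.
-/

open scoped MatrixOrder

section NegativePart

variable {n : Type*}

theorem re_apply_self_le_of_le {X Y : Matrix n n ℂ} (h : X ≤ Y) (i : n) :
    (X i i).re ≤ (Y i i).re := by
  have := (Complex.le_def.1 ((le_iff.1 h).diag_nonneg (i := i))).1
  simpa using this

variable [Fintype n]

theorem re_trace_mul_nonneg {P Q : Matrix n n ℂ} (hP : 0 ≤ P) (hQ : 0 ≤ Q) :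
    0 ≤ (P * Q).trace.re := by
  obtain ⟨C, rfl⟩ := CStarAlgebra.nonneg_iff_eq_star_mul_self.1 hQ
  rw [← mul_assoc, trace_mul_comm, ← mul_assoc]
  exact (Complex.le_def.1 (hP.posSemidef.mul_mul_conjTranspose_same C).trace_nonneg).1

variable [DecidableEq n]

theorem trace_conjStarAlgAut (U : unitaryGroup n ℂ) (X : Matrix n n ℂ) :
    (Unitary.conjStarAlgAut ℂ _ U X).trace = X.trace := by
  rw [Unitary.conjStarAlgAut_apply, trace_mul_cycle, Unitary.coe_star_mul_self, one_mul]

theorem re_trace_mul_eq_sum_eigenvalues {M : Matrix n n ℂ} (hM : M.IsHermitian)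
    (Q : Matrix n n ℂ) :
    (Q * M).trace.re = ∑ i, (Unitary.conjStarAlgAut ℂ _ (star hM.eigenvectorUnitary) Q i i).re *
      hM.eigenvalues i := by
  rw [← trace_conjStarAlgAut (star hM.eigenvectorUnitary) (Q * M), map_mul,
    hM.conjStarAlgAut_star_eigenvectorUnitary, trace, Complex.re_sum]
  simp only [diag_apply, mul_diagonal, Function.comp_apply, Complex.coe_algebraMap,
    Complex.re_mul_ofReal]

theorem negSum_eq_sum_negPart {M : Matrix n n ℂ} (hM : M.IsHermitian) :
    negSum M = ∑ i, (hM.eigenvalues i)⁻ := by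
  rw [negSum, dif_pos hM, abs_of_nonpos (sum_nonpos fun i hi => (mem_filter.1 hi).2.le),
    sum_filter, ← sum_neg_distrib]
  refine sum_congr rfl fun i _ => ?_
  split_ifs with h
  · exact (negPart_eq_neg.2 h.le).symm
  · rw [neg_zero, negPart_eq_zero.2 (not_lt.1 h)]

theorem negSum_nonneg (M : Matrix n n ℂ) : 0 ≤ negSum M := by
  rw [negSum]
  split_ifs
  exacts [abs_nonneg _, le_rfl]

theorem neg_re_trace_mul_le_negSum {M Q : Matrix n n ℂ} (hM : M.IsHermitian) (hQ₀ : 0 ≤ Q)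
    (hQ₁ : Q ≤ 1) : -(Q * M).trace.re ≤ negSum M := by
  rw [re_trace_mul_eq_sum_eigenvalues hM, negSum_eq_sum_negPart hM, ← sum_neg_distrib]
  refine sum_le_sum fun i _ => ?_
  set φ := Unitary.conjStarAlgAut ℂ _ (star hM.eigenvectorUnitary)
  have h₀ : 0 ≤ (φ Q i i).re := by simpa using re_apply_self_le_of_le (map_nonneg φ hQ₀) i
  have h₁ : (φ Q i i).re ≤ 1 := by
    simpa using re_apply_self_le_of_le (OrderHomClass.mono φ hQ₁) i
  nlinarith [neg_le_negPart (hM.eigenvalues i), negPart_nonneg (hM.eigenvalues i)]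

theorem negSum_sub_le_re_trace {P R : Matrix n n ℂ} (hP : 0 ≤ P) (hR : 0 ≤ R) :
    negSum (P - R) ≤ R.trace.re := by
  have hM : (P - R).IsHermitian := hP.posSemidef.1.sub hR.posSemidef.1
  rw [negSum_eq_sum_negPart hM, ← trace_conjStarAlgAut (star hM.eigenvectorUnitary) R, trace,
    Complex.re_sum]
  refine sum_le_sum fun i _ => ?_
  set φ := Unitary.conjStarAlgAut ℂ _ (star hM.eigenvectorUnitary)
  have hp : 0 ≤ (φ P i i).re := by simpa using re_apply_self_le_of_le (map_nonneg φ hP) i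
  have hr : 0 ≤ (φ R i i).re := by simpa using re_apply_self_le_of_le (map_nonneg φ hR) i
  have hpr : (φ P i i).re - (φ R i i).re = hM.eigenvalues i := by
    have := congrFun₂ hM.conjStarAlgAut_star_eigenvectorUnitary i i
    rw [map_sub, diagonal_apply_eq] at this
    exact congrArg Complex.re this
  exact max_le (by rw [← hpr, diag_apply]; linarith) hr

theorem negSum_eq_zero_of_nonneg {P : Matrix n n ℂ} (hP : 0 ≤ P) : negSum P = 0 :=
  le_antisymm (by simpa using negSum_sub_le_re_trace hP le_rfl) (negSum_nonneg P)

end NegativePart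

section TensorPower

section Algebra

variable (R : Type*) {ι n A : Type*} [Fintype ι] [CommSemiring R] [CommSemiring A] [Algebra R A]

/-- The tensor product `⊗ᵢ Mᵢ` of a finite family of square matrices, indexed by functions, as an
`R`-multilinear function of the family. The scalars `R` are kept apart from the entries so that
complex matrices can be combined with real coefficients. -/
def matrixTensor : MultilinearMap R (fun _ : ι => Matrix n n A) (Matrix (ι → n) (ι → n) A) :=
  (ofLinearEquiv R).toLinearMap.compMultilinearMap <| .pi fun x => .pi fun y =>
    (MultilinearMap.mkPiAlgebra R ι A).compLinearMap fun i => entryLinearMap R A (x i) (y i)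

variable {R}

@[simp]
theorem matrixTensor_apply (M : ι → Matrix n n A) (x y : ι → n) :
    matrixTensor R M x y = ∏ i, M i (x i) (y i) := rfl

theorem matrixTensor_mul [DecidableEq ι] [Fintype n] (M N : ι → Matrix n n A) :
    matrixTensor R M * matrixTensor R N = matrixTensor R (M * N) := by
  ext x y
  simp only [mul_apply, matrixTensor_apply, Pi.mul_apply, prod_univ_sum, Fintype.piFinset_univ,
    prod_mul_distrib]

theorem trace_matrixTensor [DecidableEq ι] [Fintype n] (M : ι → Matrix n n A) :
    (matrixTensor R M).trace = ∏ i, (M i).trace := by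
  simp only [trace, diag_apply, matrixTensor_apply, prod_univ_sum, Fintype.piFinset_univ]

theorem matrixTensor_conjTranspose [StarRing A] (M : ι → Matrix n n A) :
    (matrixTensor R M)ᴴ = matrixTensor R fun i => (M i)ᴴ := by
  ext x y
  simp only [conjTranspose_apply, matrixTensor_apply, star_prod]

theorem matrixTensor_one [DecidableEq n] :
    matrixTensor R (fun _ : ι => (1 : Matrix n n A)) = 1 := by
  ext x y
  simp only [matrixTensor_apply, one_apply, Fintype.prod_ite_zero, prod_const_one, funext_iff]

theorem matrixTensor_smul_add_smul [DecidableEq ι] (a b : ι → R) (M N : ι → Matrix n n A) :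
    matrixTensor R (fun i => a i • M i + b i • N i) =
      ∑ s : Finset ι, (∏ i, s.piecewise a b i) • matrixTensor R (s.piecewise M N) := by
  refine ((matrixTensor R).map_add_univ (fun i => a i • M i) fun i => b i • N i).trans ?_
  refine sum_congr rfl fun s _ => ?_
  rw [← (matrixTensor R).map_smul_univ]
  congr 1
  ext1 i
  by_cases hi : i ∈ s <;> simp [hi]

end Algebra

section Order

theorem pow_add_mul_mul_neg_one_pow_nonneg {r t : ℝ} (hr : 1 ≤ r) (ht₀ : 0 ≤ t) (ht₁ : t ≤ 1)
    (k : ℕ) : 0 ≤ r ^ k + t * r * (-1) ^ k := by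
  rcases k.even_or_odd with hk | hk
  · rw [hk.neg_one_pow]
    positivity
  · have : r ≤ r ^ k := le_self_pow₀ hr hk.pos.ne'
    rw [hk.neg_one_pow]
    nlinarith

variable {ι n : Type*} [Fintype ι] [Finite n]

theorem matrixTensor_nonneg {M : ι → Matrix n n ℂ} (hM : ∀ i, 0 ≤ M i) :
    0 ≤ matrixTensor ℝ M := by
  cases nonempty_fintype n
  choose C hC using fun i => CStarAlgebra.nonneg_iff_eq_star_mul_self.1 (hM i)
  have hfactor : matrixTensor ℝ M = (matrixTensor ℝ C)ᴴ * matrixTensor ℝ C := by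
    rw [matrixTensor_conjTranspose, matrixTensor_mul]
    exact congrArg _ (funext hC)
  exact hfactor ▸ (posSemidef_conjTranspose_mul_self _).nonneg

theorem matrixTensor_mono {M N : ι → Matrix n n ℂ} (hM : ∀ i, 0 ≤ M i) (hMN : ∀ i, M i ≤ N i) :
    matrixTensor ℝ M ≤ matrixTensor ℝ N := by
  have hexpand := (matrixTensor ℝ).map_add_univ M (N - M)
  rw [add_sub_cancel] at hexpand
  calc matrixTensor ℝ M = matrixTensor ℝ (univ.piecewise M (N - M)) := by rw [piecewise_univ]
    _ ≤ ∑ s : Finset ι, matrixTensor ℝ (s.piecewise M (N - M)) :=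
      single_le_sum (f := fun s : Finset ι => matrixTensor ℝ (s.piecewise M (N - M)))
        (fun s _ => matrixTensor_nonneg fun i => s.piecewise_cases M (N - M) (0 ≤ ·) (hM i)
          (sub_nonneg.2 (hMN i))) (mem_univ univ)
    _ = matrixTensor ℝ N := hexpand.symm

theorem matrixTensor_add_smul_add_smul_sub_nonneg {M N : ι → Matrix n n ℂ} (hM : ∀ i, 0 ≤ M i)
    (hN : ∀ i, 0 ≤ N i) {r t : ℝ} (hr : 1 ≤ r) (ht₀ : 0 ≤ t) (ht₁ : t ≤ 1) :
    0 ≤ matrixTensor ℝ (fun i => M i + r • N i) +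
      (t * r) • matrixTensor ℝ (fun i => M i - N i) := by
  cases nonempty_fintype n
  have hexpand (c : ℝ) : matrixTensor ℝ (fun i => M i + c • N i) =
      ∑ s : Finset ι, c ^ #sᶜ • matrixTensor ℝ (s.piecewise M N) := by
    simpa [prod_piecewise, ← compl_eq_univ_sdiff] using
      matrixTensor_smul_add_smul (fun _ => 1) (fun _ => c) M N
  have hsub : (fun i => M i - N i) = fun i => M i + (-1 : ℝ) • N i := by
    simp only [neg_one_smul, sub_eq_add_neg]
  rw [hsub, hexpand, hexpand, smul_sum, ← sum_add_distrib]
  refine sum_nonneg fun s _ => ?_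
  rw [smul_smul, ← add_smul]
  exact smul_nonneg (pow_add_mul_mul_neg_one_pow_nonneg hr ht₀ ht₁ _)
    (matrixTensor_nonneg fun i => s.piecewise_cases M N (0 ≤ ·) (hM i) (hN i))

end Order

end TensorPower

section PairOperators

/-- The swap operator `|i, j⟩ ↦ |j, i⟩` on `ℂ^d ⊗ ℂ^d`. -/
def swapMatrix (d : ℕ) : Matrix (Fin d × Fin d) (Fin d × Fin d) ℂ :=
  Equiv.Perm.permMatrix ℂ (Equiv.prodComm (Fin d) (Fin d))

/-- The projector onto the symmetric subspace of `ℂ^d ⊗ ℂ^d`; its complement `1 - symProj d` is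
the projector onto the antisymmetric subspace. -/
noncomputable def symProj (d : ℕ) : Matrix (Fin d × Fin d) (Fin d × Fin d) ℂ :=
  (2⁻¹ : ℝ) • (1 + swapMatrix d)

/-- The operator `(1 + d Φ) / (d + 1)`: the tensor factor of the witness `WE`, rescaled so as to lie
between `Φ` and `1`. -/
noncomputable def isotropicEffect (d : ℕ) : Matrix (Fin d × Fin d) (Fin d × Fin d) ℂ :=
  ((d : ℝ) + 1)⁻¹ • (1 + (d : ℝ) • phiM d)

/-- The maximally mixed state on the orthogonal complement of the maximally entangled state. -/
noncomputable def phiPerpState (d : ℕ) : Matrix (Fin d × Fin d) (Fin d × Fin d) ℂ :=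
  ((d : ℝ) ^ 2 - 1)⁻¹ • (1 - phiM d)

variable {d : ℕ}

theorem swapMatrix_apply (x y : Fin d × Fin d) :
    swapMatrix d x y = if x.1 = y.2 ∧ x.2 = y.1 then 1 else 0 := by
  simp only [swapMatrix, Equiv.Perm.permMatrix, PEquiv.toMatrix_apply, Equiv.toPEquiv_apply,
    Option.mem_def, Option.some.injEq, Equiv.prodComm_apply, Prod.ext_iff, Prod.fst_swap,
    Prod.snd_swap, and_comm]

theorem swapMatrix_mul_self : swapMatrix d * swapMatrix d = 1 := by
  rw [swapMatrix, ← permMatrix_mul]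
  exact permMatrix_one

theorem conjTranspose_swapMatrix : (swapMatrix d)ᴴ = swapMatrix d := by
  rw [swapMatrix, conjTranspose_permMatrix]
  rfl

theorem trace_swapMatrix : (swapMatrix d).trace = d := by
  have hdiag (i j : Fin d) : (i = j ∧ j = i) ↔ i = j := and_iff_left_of_imp Eq.symm
  simp only [trace, diag_apply, swapMatrix_apply, Fintype.sum_prod_type, hdiag]
  simp

theorem isStarProjection_symProj : IsStarProjection (symProj d) where
  isIdempotentElem := by
    simp only [IsIdempotentElem, symProj, smul_mul_smul_comm, add_mul, mul_add, one_mul, mul_one,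
      swapMatrix_mul_self]
    module
  isSelfAdjoint := by
    rw [isSelfAdjoint_iff, star_eq_conjTranspose, symProj, conjTranspose_smul, conjTranspose_add,
      conjTranspose_one, conjTranspose_swapMatrix, star_trivial]

theorem trace_one_sub_symProj : (1 - symProj d).trace = ((d * (d - 1) / 2 : ℝ) : ℂ) := by
  simp only [symProj, trace_sub, trace_smul, trace_add, trace_one, trace_swapMatrix,
    Fintype.card_prod, Fintype.card_fin, Complex.real_smul]
  push_cast
  ring

section Projector

variable [NeZero d]

theorem isStarProjection_phiM : IsStarProjection (phiM d) where
  isIdempotentElem := by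
    ext ⟨x₁, x₂⟩ ⟨y₁, y₂⟩
    by_cases hx : x₁ = x₂ <;> by_cases hy : y₁ = y₂ <;>
      simp [phiM, mul_apply, Fintype.sum_prod_type, hx, hy, NeZero.ne]
  isSelfAdjoint := by
    ext ⟨x₁, x₂⟩ ⟨y₁, y₂⟩
    by_cases hx : x₁ = x₂ <;> by_cases hy : y₁ = y₂ <;> simp [phiM, hx, hy]

theorem phiM_nonneg : 0 ≤ phiM d := isStarProjection_phiM.nonneg

theorem trace_phiM : (phiM d).trace = 1 := by
  simp [phiM, trace, Fintype.sum_prod_type, NeZero.ne]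

theorem phiM_le_isotropicEffect : phiM d ≤ isotropicEffect d := by
  have hsub : isotropicEffect d - phiM d = ((d : ℝ) + 1)⁻¹ • (1 - phiM d) := by
    rw [isotropicEffect]
    match_scalars
    · field_simp
    · field_simp
      ring
  rw [← sub_nonneg, hsub]
  exact smul_nonneg (by positivity) isStarProjection_phiM.one_sub_nonneg

theorem isotropicEffect_nonneg : 0 ≤ isotropicEffect d :=
  phiM_nonneg.trans phiM_le_isotropicEffect

theorem isotropicEffect_le_one : isotropicEffect d ≤ 1 := by
  have hsub : 1 - isotropicEffect d = ((d : ℝ) / (d + 1)) • (1 - phiM d) := by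
    rw [isotropicEffect]
    match_scalars
    · field_simp
      ring
    · field_simp
  rw [← sub_nonneg, hsub]
  exact smul_nonneg (by positivity) isStarProjection_phiM.one_sub_nonneg

theorem phiM_mul_phiPerpState : phiM d * phiPerpState d = 0 := by
  rw [phiPerpState, mul_smul_comm, isStarProjection_phiM.mul_one_sub_self, smul_zero]

theorem isotropicEffect_mul_phiM : isotropicEffect d * phiM d = phiM d := by
  rw [isotropicEffect, smul_mul_assoc, add_mul, one_mul, smul_mul_assoc,
    isStarProjection_phiM.isIdempotentElem.eq]
  match_scalars
  field_simp
  ring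

theorem isotropicEffect_mul_phiPerpState :
    isotropicEffect d * phiPerpState d = ((d : ℝ) + 1)⁻¹ • phiPerpState d := by
  rw [isotropicEffect, smul_mul_assoc, add_mul, one_mul, smul_mul_assoc, phiM_mul_phiPerpState,
    smul_zero, add_zero]

end Projector

section AtLeastTwo

variable [d.AtLeastTwo]

theorem one_lt_cast_of_atLeastTwo : (1 : ℝ) < d :=
  Nat.one_lt_cast.2 Nat.AtLeastTwo.prop

theorem sq_sub_one_pos_of_atLeastTwo : 0 < (d : ℝ) ^ 2 - 1 := by
  nlinarith [one_lt_cast_of_atLeastTwo (d := d)]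

theorem phiPerpState_nonneg : 0 ≤ phiPerpState d :=
  smul_nonneg (inv_nonneg.2 sq_sub_one_pos_of_atLeastTwo.le)
    isStarProjection_phiM.one_sub_nonneg

theorem trace_phiPerpState : (phiPerpState d).trace = 1 := by
  have hd : (d : ℂ) ^ 2 - 1 ≠ 0 := by
    exact_mod_cast (sq_sub_one_pos_of_atLeastTwo (d := d)).ne'
  rw [phiPerpState, trace_smul, trace_sub, trace_phiM, trace_one, Fintype.card_prod,
    Fintype.card_fin, Complex.real_smul]
  push_cast
  rw [← sq, inv_mul_cancel₀ hd]

end AtLeastTwo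

end PairOperators

section PairTranspose

variable {d : ℕ} (a b : Prop) [Decidable a] [Decidable b]

/-- The partial transpose on `ℂ^d ⊗ ℂ^d` of the first factor if `a` holds and of the second factor
if `b` holds. -/
def pairTranspose : Matrix (Fin d × Fin d) (Fin d × Fin d) ℂ →ₗ[ℝ]
    Matrix (Fin d × Fin d) (Fin d × Fin d) ℂ where
  toFun M := of fun x y =>
    M (if a then y.1 else x.1, if b then y.2 else x.2)
      (if a then x.1 else y.1, if b then x.2 else y.2)
  map_add' _ _ := rfl
  map_smul' _ _ := rfl

theorem pairTranspose_one :
    pairTranspose a b (1 : Matrix (Fin d × Fin d) (Fin d × Fin d) ℂ) = 1 := by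
  ext ⟨x₁, x₂⟩ ⟨y₁, y₂⟩
  by_cases ha : a <;> by_cases hb : b <;> simp [pairTranspose, one_apply, ha, hb, eq_comm]

variable {a b}

theorem pairTranspose_phiM_of_iff (h : a ↔ b) : pairTranspose a b (phiM d) = phiM d := by
  ext ⟨x₁, x₂⟩ ⟨y₁, y₂⟩
  by_cases hb : b <;> simp [pairTranspose, phiM, h, hb, and_comm]

theorem pairTranspose_phiM_of_not_iff (h : ¬(a ↔ b)) :
    pairTranspose a b (phiM d) = (d : ℝ)⁻¹ • swapMatrix d := by
  ext ⟨x₁, x₂⟩ ⟨y₁, y₂⟩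
  by_cases ha : a <;> by_cases hb : b <;> simp [ha, hb] at h <;>
    simp [pairTranspose, phiM, swapMatrix_apply, ha, hb, and_comm, eq_comm]

theorem pairTranspose_phiM_eq_smul_sub (h : ¬(a ↔ b)) :
    pairTranspose a b (phiM d) = (d : ℝ)⁻¹ • (symProj d - (1 - symProj d)) := by
  rw [pairTranspose_phiM_of_not_iff h, symProj]
  module

theorem pairTranspose_isotropicEffect_of_iff (h : a ↔ b) :
    pairTranspose a b (isotropicEffect d) = isotropicEffect d := by
  rw [isotropicEffect, map_smul, map_add, map_smul, pairTranspose_one,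
    pairTranspose_phiM_of_iff h]

theorem pairTranspose_isotropicEffect_of_not_iff [NeZero d] (h : ¬(a ↔ b)) :
    pairTranspose a b (isotropicEffect d) = (2 / (d + 1) : ℝ) • symProj d := by
  rw [isotropicEffect, map_smul, map_add, map_smul, pairTranspose_one,
    pairTranspose_phiM_of_not_iff h, smul_inv_smul₀ (NeZero.ne _), symProj, smul_smul]
  congr 1
  ring

theorem pairTranspose_half_smul_one_sub [NeZero d] (h : ¬(a ↔ b)) :
    pairTranspose a b ((2⁻¹ : ℝ) • (1 - (d : ℝ) • phiM d)) = 1 - symProj d := by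
  rw [map_smul, map_sub, map_smul, pairTranspose_one, pairTranspose_phiM_of_not_iff h,
    smul_inv_smul₀ (NeZero.ne _), symProj]
  module

theorem pairTranspose_phiPerpState [d.AtLeastTwo] (h : ¬(a ↔ b)) :
    pairTranspose a b (phiPerpState d) = ((d : ℝ) * (d + 1))⁻¹ •
      (symProj d + ((d + 1) / (d - 1) : ℝ) • (1 - symProj d)) := by
  have hd₀ : (d : ℝ) ≠ 0 := NeZero.ne _
  have hd₁ : (d : ℝ) - 1 ≠ 0 := (sub_pos.2 one_lt_cast_of_atLeastTwo).ne'
  have hsq : (d : ℝ) ^ 2 - 1 = (d - 1) * (d + 1) := by ring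
  rw [phiPerpState, map_smul, map_sub, pairTranspose_one, pairTranspose_phiM_of_not_iff h, symProj,
    hsq]
  match_scalars <;> field_simp <;> ring

theorem pairTranspose_isotropicEffect_nonneg [NeZero d] :
    0 ≤ pairTranspose a b (isotropicEffect d) := by
  by_cases h : a ↔ b
  · rw [pairTranspose_isotropicEffect_of_iff h]
    exact isotropicEffect_nonneg
  · rw [pairTranspose_isotropicEffect_of_not_iff h]
    exact smul_nonneg (by positivity) isStarProjection_symProj.nonneg

theorem pairTranspose_isotropicEffect_le_one [NeZero d] :
    pairTranspose a b (isotropicEffect d) ≤ 1 := by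
  by_cases h : a ↔ b
  · rw [pairTranspose_isotropicEffect_of_iff h]
    exact isotropicEffect_le_one
  · have hcoeff : (2 / (d + 1) : ℝ) ≤ 1 := by
      rw [div_le_one (by positivity)]
      exact_mod_cast Nat.succ_le_succ (NeZero.one_le (n := d))
    rw [pairTranspose_isotropicEffect_of_not_iff h]
    calc (2 / (d + 1) : ℝ) • symProj d ≤ symProj d :=
          smul_le_of_le_one_left isStarProjection_symProj.nonneg hcoeff
      _ ≤ 1 := isStarProjection_symProj.le_one

end PairTranspose

section PartialTranspose

variable {d : ℕ} {V E : Type*} [DecidableEq V] (orient : E → V × V) (S : Finset V)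

theorem ptParty_add (M N : Matrix (E → Fin d × Fin d) (E → Fin d × Fin d) ℂ) :
    ptParty E orient S (M + N) = ptParty E orient S M + ptParty E orient S N := rfl

theorem ptParty_smul (c : ℝ) (M : Matrix (E → Fin d × Fin d) (E → Fin d × Fin d) ℂ) :
    ptParty E orient S (c • M) = c • ptParty E orient S M := rfl

theorem isHermitian_ptParty {M : Matrix (E → Fin d × Fin d) (E → Fin d × Fin d) ℂ}
    (hM : M.IsHermitian) : (ptParty E orient S M).IsHermitian := by
  ext x y
  exact hM.apply _ _

/-- The involution of (row, column) index pairs through which `ptParty` acts: it exchanges the row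
and column indices of all factors owned by vertices in `S`. -/
def ptIndexSwap (q : (E → Fin d × Fin d) × (E → Fin d × Fin d)) :
    (E → Fin d × Fin d) × (E → Fin d × Fin d) :=
  (fun e => (if (orient e).1 ∈ S then (q.2 e).1 else (q.1 e).1,
             if (orient e).2 ∈ S then (q.2 e).2 else (q.1 e).2),
   fun e => (if (orient e).1 ∈ S then (q.1 e).1 else (q.2 e).1,
             if (orient e).2 ∈ S then (q.1 e).2 else (q.2 e).2))

theorem involutive_ptIndexSwap : Function.Involutive (ptIndexSwap (d := d) orient S) := by
  rintro ⟨x, y⟩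
  ext e : 3 <;> simp only [ptIndexSwap] <;> split_ifs <;> rfl

variable [Fintype E]

theorem trace_ptParty_mul_ptParty [DecidableEq E]
    (M N : Matrix (E → Fin d × Fin d) (E → Fin d × Fin d) ℂ) :
    (ptParty E orient S M * ptParty E orient S N).trace = (M * N).trace := by
  simp only [trace, diag_apply, mul_apply, ← Fintype.sum_prod_type']
  exact Equiv.sum_comp (involutive_ptIndexSwap orient S).toPerm fun q => M q.1 q.2 * N q.2 q.1

theorem ptParty_matrixTensor (M : E → Matrix (Fin d × Fin d) (Fin d × Fin d) ℂ) :
    ptParty E orient S (matrixTensor ℝ M) =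
      matrixTensor ℝ fun e => pairTranspose ((orient e).1 ∈ S) ((orient e).2 ∈ S) (M e) := rfl

end PartialTranspose

section CutEdges

variable {V E : Type*} [DecidableEq V] [Fintype E]

/-- The edges with exactly one endpoint in `S`. -/
def cutEdges (orient : E → V × V) (S : Finset V) : Finset E :=
  {e | ¬((orient e).1 ∈ S ↔ (orient e).2 ∈ S)}

theorem mem_cutEdges {orient : E → V × V} {S : Finset V} {e : E} :
    e ∈ cutEdges orient S ↔ ¬((orient e).1 ∈ S ↔ (orient e).2 ∈ S) := by
  simp [cutEdges]

end CutEdges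

section Witness

variable {d : ℕ} {V E : Type*} [DecidableEq V] [Fintype E] [DecidableEq E] {orient : E → V × V}
  {S : Finset V} {e₀ : E}

theorem WE_eq_smul_sub_smul :
    WE d E = ((d + 1) / 2 : ℝ) • matrixTensor ℝ (fun _ : E => isotropicEffect d) -
      (d : ℝ) • matrixTensor ℝ (fun _ : E => phiM d) := by
  have hd : (d : ℂ) + 1 ≠ 0 := Nat.cast_add_one_ne_zero d
  ext x y
  simp only [WE, isotropicEffect, (matrixTensor ℝ).map_smul_univ, prod_const, card_univ,
    zpow_sub₀ hd, zpow_one, zpow_natCast, Matrix.add_apply, Matrix.sub_apply, Matrix.smul_apply,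
    of_apply, matrixTensor_apply, Complex.real_smul, smul_eq_mul, inv_pow]
  push_cast
  ring

theorem half_smul_isotropicEffect :
    ((d + 1) / 2 : ℝ) • isotropicEffect d =
      (d : ℝ) • phiM d + (2⁻¹ : ℝ) • (1 - (d : ℝ) • phiM d) := by
  rw [isotropicEffect]
  match_scalars
  · field_simp
  · field_simp
    ring

/-- The tensor product with factor `(1 - d Φ) / 2` at the edge `e₀` and `isotropicEffect d` at all
others: what remains of `WE` after removing a positive part. Across any cut containing `e₀` its
partial transpose lies between `0` and `1`. -/
noncomputable def cutWitness (d : ℕ) (e₀ : E) :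
    Matrix (E → Fin d × Fin d) (E → Fin d × Fin d) ℂ :=
  matrixTensor ℝ (Function.update (fun _ => isotropicEffect d) e₀
    ((2⁻¹ : ℝ) • (1 - (d : ℝ) • phiM d)))

theorem WE_eq_smul_sub_add_cutWitness (e₀ : E) :
    WE d E = (d : ℝ) • (matrixTensor ℝ (Function.update (fun _ => isotropicEffect d) e₀ (phiM d)) -
        matrixTensor ℝ fun _ => phiM d) + cutWitness d e₀ := by
  have hsplit : ((d + 1) / 2 : ℝ) • matrixTensor ℝ (fun _ : E => isotropicEffect d) =
      (d : ℝ) • matrixTensor ℝ (Function.update (fun _ => isotropicEffect d) e₀ (phiM d)) +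
        cutWitness d e₀ := by
    rw [cutWitness, ← (matrixTensor ℝ).map_update_smul, ← (matrixTensor ℝ).map_update_add,
      ← half_smul_isotropicEffect, (matrixTensor ℝ).map_update_smul, Function.update_eq_self]
  rw [WE_eq_smul_sub_smul, hsplit]
  module

theorem neg_re_trace_add_mul_le_negSum_ptParty
    {P T σ : Matrix (E → Fin d × Fin d) (E → Fin d × Fin d) ℂ} (hP : 0 ≤ P)
    (hT : ptParty E orient S T ∈ Set.Icc 0 1) (hσ : 0 ≤ σ) :
    -((P + T) * σ).trace.re ≤ negSum (ptParty E orient S σ) := by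
  have hPσ := re_trace_mul_nonneg hP hσ
  have hTσ := neg_re_trace_mul_le_negSum (isHermitian_ptParty orient S hσ.posSemidef.1) hT.1 hT.2
  rw [trace_ptParty_mul_ptParty] at hTσ
  rw [add_mul, trace_add, Complex.add_re]
  linarith

variable [NeZero d]

theorem matrixTensor_phiM_le_update_isotropicEffect (e₀ : E) :
    matrixTensor ℝ (fun _ => phiM d) ≤
      matrixTensor ℝ (Function.update (fun _ => isotropicEffect d) e₀ (phiM d)) := by
  refine matrixTensor_mono (fun _ => phiM_nonneg) fun e => ?_
  obtain rfl | he := eq_or_ne e e₀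
  · rw [Function.update_self]
  · rw [Function.update_of_ne he]
    exact phiM_le_isotropicEffect

theorem ptParty_cutWitness_mem_Icc (he₀ : e₀ ∈ cutEdges orient S) :
    ptParty E orient S (cutWitness d e₀) ∈ Set.Icc 0 1 := by
  have hfactor (e : E) : pairTranspose ((orient e).1 ∈ S) ((orient e).2 ∈ S)
      (Function.update (fun _ => isotropicEffect d) e₀ ((2⁻¹ : ℝ) • (1 - (d : ℝ) • phiM d)) e) ∈
        Set.Icc 0 1 := by
    obtain rfl | he := eq_or_ne e e₀
    · rw [Function.update_self, pairTranspose_half_smul_one_sub (mem_cutEdges.1 he₀)]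
      exact ⟨isStarProjection_symProj.one_sub_nonneg, sub_le_self _ isStarProjection_symProj.nonneg⟩
    · rw [Function.update_of_ne he]
      exact ⟨pairTranspose_isotropicEffect_nonneg, pairTranspose_isotropicEffect_le_one⟩
  rw [cutWitness, ptParty_matrixTensor]
  refine ⟨matrixTensor_nonneg fun e => (hfactor e).1, ?_⟩
  exact (matrixTensor_mono (fun e => (hfactor e).1) fun e => (hfactor e).2).trans_eq
    matrixTensor_one

theorem neg_re_trace_WE_mul_le_negSum (hS : (cutEdges orient S).Nonempty)
    {σ : Matrix (E → Fin d × Fin d) (E → Fin d × Fin d) ℂ} (hσ : 0 ≤ σ) :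
    -(WE d E * σ).trace.re ≤ negSum (ptParty E orient S σ) := by
  obtain ⟨e₀, he₀⟩ := hS
  rw [WE_eq_smul_sub_add_cutWitness e₀]
  exact neg_re_trace_add_mul_le_negSum_ptParty
    (smul_nonneg d.cast_nonneg (sub_nonneg.2 (matrixTensor_phiM_le_update_isotropicEffect e₀)))
    (ptParty_cutWitness_mem_Icc he₀) hσ

end Witness

section PPTThreshold

variable {d : ℕ} {E : Type*}

/-- For `B ≠ ∅`, the largest weight with which `defectState d ∅` can be added to `defectState d B`
keeping the partial transpose across the cut `B` positive. -/
noncomputable def pptThreshold (d : ℕ) (B : Finset E) : ℝ :=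
  (d + 1) / (d - 1) * ((d : ℝ) + 1)⁻¹ ^ #B

variable [d.AtLeastTwo]

theorem pptThreshold_nonneg (B : Finset E) : 0 ≤ pptThreshold d B :=
  mul_nonneg (div_nonneg (by positivity) (sub_nonneg.2 one_lt_cast_of_atLeastTwo.le))
    (by positivity)

theorem one_add_mul_pptThreshold_pos {t : ℝ} (ht : 0 ≤ t) (B : Finset E) :
    0 < 1 + t * pptThreshold d B :=
  add_pos_of_pos_of_nonneg one_pos (mul_nonneg ht (pptThreshold_nonneg B))

end PPTThreshold

section DefectStates

variable {d : ℕ} {V E : Type*} [DecidableEq V] [Fintype E] [DecidableEq E] {orient : E → V × V}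
  {S : Finset V}

/-- The product state with `phiPerpState d` on the edges in `B` and the maximally entangled state on
all others. -/
noncomputable def defectState (d : ℕ) (B : Finset E) :
    Matrix (E → Fin d × Fin d) (E → Fin d × Fin d) ℂ :=
  matrixTensor ℝ (B.piecewise (fun _ => phiPerpState d) fun _ => phiM d)

/-- The normalised mixture of `defectState d B` with the fraction `t` of the largest amount of
`defectState d ∅` that keeps the partial transpose across the cut `B` positive. -/
noncomputable def pptState (d : ℕ) (t : ℝ) (B : Finset E) :
    Matrix (E → Fin d × Fin d) (E → Fin d × Fin d) ℂ :=
  (1 + t * pptThreshold d B)⁻¹ • (defectState d B + (t * pptThreshold d B) • defectState d ∅)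

theorem defectState_empty : defectState d (∅ : Finset E) = matrixTensor ℝ fun _ => phiM d := by
  rw [defectState, piecewise_empty]

theorem ptParty_defectState_empty :
    ptParty E orient S (defectState d ∅) =
      (d : ℝ)⁻¹ ^ #(cutEdges orient S) • matrixTensor ℝ fun e =>
        (cutEdges orient S).piecewise (fun _ => symProj d) (fun _ => phiM d) e -
        (cutEdges orient S).piecewise (fun _ => 1 - symProj d) 0 e := by
  have hfactor (e : E) : pairTranspose ((orient e).1 ∈ S) ((orient e).2 ∈ S) (phiM d) =
      (if e ∈ cutEdges orient S then (d : ℝ)⁻¹ else 1) •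
        ((cutEdges orient S).piecewise (fun _ => symProj d) (fun _ => phiM d) e -
        (cutEdges orient S).piecewise (fun _ => 1 - symProj d) 0 e) := by
    by_cases he : e ∈ cutEdges orient S
    · simp [he, pairTranspose_phiM_eq_smul_sub (mem_cutEdges.1 he)]
    · simp [he, pairTranspose_phiM_of_iff (not_not.1 (mt mem_cutEdges.2 he))]
  rw [defectState_empty, ptParty_matrixTensor]
  simp only [hfactor]
  rw [(matrixTensor ℝ).map_smul_univ, prod_ite_mem, univ_inter, prod_const]

theorem ptParty_defectState_empty_eq_sub {e₀ : E} (hS : cutEdges orient S = {e₀}) :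
    ptParty E orient S (defectState d ∅) =
      (d : ℝ)⁻¹ • matrixTensor ℝ (Function.update (fun _ => phiM d) e₀ (symProj d)) -
        (d : ℝ)⁻¹ • matrixTensor ℝ (Function.update (fun _ => phiM d) e₀ (1 - symProj d)) := by
  have hfactor : (fun e => ({e₀} : Finset E).piecewise (fun _ => symProj d) (fun _ => phiM d) e -
      ({e₀} : Finset E).piecewise (fun _ => 1 - symProj d) 0 e) =
        Function.update (fun _ => phiM d) e₀ (symProj d - (1 - symProj d)) := by
    ext1 e
    obtain rfl | he := eq_or_ne e e₀
    · simp
    · simp [he]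
  rw [ptParty_defectState_empty, hS, hfactor, card_singleton, pow_one, eq_sub_iff_add_eq,
    ← smul_add, ← (matrixTensor ℝ).map_update_add, sub_add_cancel]

theorem matrixTensor_update_phiM_nonneg [NeZero d] (e₀ : E)
    {X : Matrix (Fin d × Fin d) (Fin d × Fin d) ℂ} (hX : 0 ≤ X) :
    0 ≤ matrixTensor ℝ (Function.update (fun _ => phiM d) e₀ X) := by
  refine matrixTensor_nonneg fun e => ?_
  obtain rfl | he := eq_or_ne e e₀
  · rwa [Function.update_self]
  · rw [Function.update_of_ne he]
    exact phiM_nonneg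

theorem trace_matrixTensor_update_phiM [NeZero d] (e₀ : E)
    (X : Matrix (Fin d × Fin d) (Fin d × Fin d) ℂ) :
    (matrixTensor ℝ (Function.update (fun _ => phiM d) e₀ X)).trace = X.trace := by
  rw [trace_matrixTensor, Fintype.prod_eq_single e₀ fun e he => ?_, Function.update_self]
  rw [Function.update_of_ne he, trace_phiM]

theorem negSum_ptParty_defectState_empty_le [NeZero d] {e₀ : E}
    (hS : cutEdges orient S = {e₀}) :
    negSum (ptParty E orient S (defectState d ∅)) ≤ (d - 1) / 2 := by
  have hd : (d : ℝ) ≠ 0 := NeZero.ne _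
  rw [ptParty_defectState_empty_eq_sub hS]
  refine (negSum_sub_le_re_trace
    (smul_nonneg (by positivity)
      (matrixTensor_update_phiM_nonneg e₀ isStarProjection_symProj.nonneg))
    (smul_nonneg (by positivity)
      (matrixTensor_update_phiM_nonneg e₀ isStarProjection_symProj.one_sub_nonneg))).trans_eq ?_
  rw [trace_smul, trace_matrixTensor_update_phiM, trace_one_sub_symProj, Complex.real_smul,
    ← Complex.ofReal_mul, Complex.ofReal_re]
  field_simp

theorem trace_matrixTensor_phiM_mul_defectState [NeZero d] (B : Finset E) :
    (matrixTensor ℝ (fun _ => phiM d) * defectState d B).trace = if B = ∅ then 1 else 0 := by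
  have hfactor (e : E) :
      (phiM d * B.piecewise (fun _ => phiPerpState d) (fun _ => phiM d) e).trace =
        if e ∈ B then 0 else 1 := by
    by_cases he : e ∈ B <;>
      simp [he, phiM_mul_phiPerpState, isStarProjection_phiM.isIdempotentElem.eq, trace_phiM]
  simp only [defectState, matrixTensor_mul, trace_matrixTensor, Pi.mul_apply, hfactor]
  simp [zero_pow_eq]

variable [d.AtLeastTwo]

theorem trace_matrixTensor_isotropicEffect_mul_defectState (B : Finset E) :
    (matrixTensor ℝ (fun _ => isotropicEffect d) * defectState d B).trace =
      ((((d : ℝ) + 1)⁻¹ ^ #B : ℝ) : ℂ) := by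
  have hfactor (e : E) :
      (isotropicEffect d * B.piecewise (fun _ => phiPerpState d) (fun _ => phiM d) e).trace =
        if e ∈ B then (((d : ℝ) + 1)⁻¹ : ℂ) else 1 := by
    by_cases he : e ∈ B <;>
      simp [he, isotropicEffect_mul_phiPerpState, isotropicEffect_mul_phiM, trace_phiM,
        trace_phiPerpState]
  simp only [defectState, matrixTensor_mul, trace_matrixTensor, Pi.mul_apply, hfactor]
  simp [prod_ite_mem]

theorem re_trace_WE_mul_defectState (B : Finset E) :
    (WE d E * defectState d B).trace.re =
      (d - 1) / 2 * pptThreshold d B - if B = ∅ then (d : ℝ) else 0 := by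
  have hd : (d : ℝ) - 1 ≠ 0 := (sub_pos.2 one_lt_cast_of_atLeastTwo).ne'
  rw [WE_eq_smul_sub_smul, sub_mul, smul_mul_assoc, smul_mul_assoc, trace_sub, trace_smul,
    trace_smul, trace_matrixTensor_isotropicEffect_mul_defectState,
    trace_matrixTensor_phiM_mul_defectState, pptThreshold, Complex.sub_re, Complex.real_smul,
    Complex.real_smul, Complex.re_ofReal_mul, Complex.re_ofReal_mul, Complex.ofReal_re]
  split_ifs <;> simp <;> field_simp

theorem neg_re_trace_WE_mul_sum_smul_defectState (w : Finset E → ℝ) :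
    -(WE d E * ∑ B, w B • defectState d B).trace.re =
      (d - 1) / 2 * (w ∅ - ∑ B ∈ univ.erase ∅, w B * pptThreshold d B) := by
  have hd : (d : ℝ) - 1 ≠ 0 := (sub_pos.2 one_lt_cast_of_atLeastTwo).ne'
  have hempty : -(WE d E * defectState d ∅).trace.re = ((d : ℝ) - 1) / 2 := by
    rw [re_trace_WE_mul_defectState, pptThreshold, if_pos rfl, card_empty, pow_zero]
    field_simp
    ring
  have hrest : ∑ B ∈ univ.erase ∅, w B * (WE d E * defectState d B).trace.re =
      (d - 1) / 2 * ∑ B ∈ univ.erase ∅, w B * pptThreshold d B := by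
    rw [mul_sum]
    refine sum_congr rfl fun B hB => ?_
    rw [re_trace_WE_mul_defectState, if_neg (ne_of_mem_erase hB)]
    ring
  simp only [Matrix.mul_sum, trace_sum, Complex.re_sum, mul_smul_comm, trace_smul,
    Complex.real_smul, Complex.re_ofReal_mul]
  rw [← add_sum_erase _ _ (mem_univ ∅), hrest, neg_add, ← mul_neg, hempty]
  ring

theorem defectState_nonneg (B : Finset E) : 0 ≤ defectState d B :=
  matrixTensor_nonneg fun e => by
    by_cases he : e ∈ B <;> simp [he, phiPerpState_nonneg, phiM_nonneg]

theorem trace_defectState (B : Finset E) : (defectState d B).trace = 1 := by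
  rw [defectState, trace_matrixTensor]
  exact prod_eq_one fun e _ => by
    by_cases he : e ∈ B <;> simp [he, trace_phiPerpState, trace_phiM]

theorem isState_pptState {t : ℝ} (ht : 0 ≤ t) (B : Finset E) : IsState (pptState d t B) := by
  have hpos := one_add_mul_pptThreshold_pos (d := d) ht B
  constructor
  · refine (smul_nonneg (inv_nonneg.2 hpos.le) (add_nonneg (defectState_nonneg B) ?_)).posSemidef
    exact smul_nonneg (mul_nonneg ht (pptThreshold_nonneg B)) (defectState_nonneg ∅)
  · rw [pptState, trace_smul, trace_add, trace_smul, trace_defectState, trace_defectState,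
      Complex.real_smul, Complex.real_smul, mul_one]
    exact_mod_cast inv_mul_cancel₀ hpos.ne'

theorem pptState_empty {t : ℝ} (ht : 0 ≤ t) : pptState d t (∅ : Finset E) = defectState d ∅ := by
  rw [pptState, inv_smul_eq_iff₀ (one_add_mul_pptThreshold_pos ht _).ne', add_smul, one_smul]

theorem ptParty_defectState_cutEdges :
    ptParty E orient S (defectState d (cutEdges orient S)) =
      ((d : ℝ) * (d + 1))⁻¹ ^ #(cutEdges orient S) • matrixTensor ℝ fun e =>
        (cutEdges orient S).piecewise (fun _ => symProj d) (fun _ => phiM d) e +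
        ((d + 1) / (d - 1) : ℝ) • (cutEdges orient S).piecewise (fun _ => 1 - symProj d) 0 e := by
  have hfactor (e : E) : pairTranspose ((orient e).1 ∈ S) ((orient e).2 ∈ S)
      ((cutEdges orient S).piecewise (fun _ => phiPerpState d) (fun _ => phiM d) e) =
      (if e ∈ cutEdges orient S then ((d : ℝ) * (d + 1))⁻¹ else 1) •
        ((cutEdges orient S).piecewise (fun _ => symProj d) (fun _ => phiM d) e +
        ((d + 1) / (d - 1) : ℝ) • (cutEdges orient S).piecewise (fun _ => 1 - symProj d) 0 e) := by
    by_cases he : e ∈ cutEdges orient S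
    · simp [he, pairTranspose_phiPerpState (mem_cutEdges.1 he)]
    · simp [he, pairTranspose_phiM_of_iff (not_not.1 (mt mem_cutEdges.2 he))]
  rw [defectState, ptParty_matrixTensor]
  simp only [hfactor]
  rw [(matrixTensor ℝ).map_smul_univ, prod_ite_mem, univ_inter, prod_const]

theorem ptParty_pptState_nonneg {t : ℝ} (ht₀ : 0 ≤ t) (ht₁ : t ≤ 1) :
    0 ≤ ptParty E orient S (pptState d t (cutEdges orient S)) := by
  set B := cutEdges orient S with hB
  have hd : (0 : ℝ) < d - 1 := sub_pos.2 one_lt_cast_of_atLeastTwo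
  have hcoeff : t * pptThreshold d B * (d : ℝ)⁻¹ ^ #B =
      ((d : ℝ) * (d + 1))⁻¹ ^ #B * (t * ((d + 1) / (d - 1))) := by
    rw [pptThreshold, mul_inv, mul_pow]
    ring
  rw [pptState, ptParty_smul, ptParty_add, ptParty_smul, hB, ptParty_defectState_cutEdges,
    ptParty_defectState_empty, ← hB, smul_smul, hcoeff, mul_smul, ← smul_add]
  refine smul_nonneg (inv_nonneg.2 (one_add_mul_pptThreshold_pos ht₀ B).le)
    (smul_nonneg (by positivity) (matrixTensor_add_smul_add_smul_sub_nonneg (fun e => ?_)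
      (fun e => ?_) ((one_le_div hd).2 (by linarith)) ht₀ ht₁))
  · by_cases he : e ∈ B <;> simp [he, isStarProjection_symProj.nonneg, phiM_nonneg]
  · by_cases he : e ∈ B <;> simp [he, isStarProjection_symProj.le_one]

end DefectStates

section OptimalDecomposition

theorem exists_mem_Icc_sub_mul_eq_max {a c : ℝ} (ha : 0 ≤ a) :
    ∃ t ∈ Set.Icc (0 : ℝ) 1, a - t * c = max 0 (a - c) := by
  obtain hca | hac := le_or_gt c a
  · exact ⟨1, by simp, by rw [one_mul, max_eq_right (sub_nonneg.2 hca)]⟩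
  · have hc : 0 < c := ha.trans_lt hac
    refine ⟨a / c, ⟨div_nonneg ha hc.le, (div_le_one hc).2 hac.le⟩, ?_⟩
    rw [div_mul_cancel₀ _ hc.ne', sub_self, max_eq_left (sub_nonpos.2 hac.le)]

variable {d : ℕ} {V E : Type*} [Fintype V] [DecidableEq V] [Fintype E] [DecidableEq E]
  {orient : E → V × V} {ρ : Matrix (E → Fin d × Fin d) (E → Fin d × Fin d) ℂ}

/-- The values `∑ p_S N_S(ρ_S)` over all decompositions of `ρ` labelled by nonempty proper sets of
vertices; `GMEnegNet` is their infimum. -/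
def gmeCosts (orient : E → V × V) (ρ : Matrix (E → Fin d × Fin d) (E → Fin d × Fin d) ℂ) : Set ℝ :=
  {r : ℝ | ∃ (m : ℕ) (S : Fin m → Finset V) (p : Fin m → ℝ)
      (σ : Fin m → Matrix (E → Fin d × Fin d) (E → Fin d × Fin d) ℂ),
      (∀ k, (S k).Nonempty) ∧ (∀ k, S k ≠ Finset.univ) ∧ (∀ k, 0 ≤ p k) ∧
      (∀ k, IsState (σ k)) ∧ ρ = ∑ k, (p k : ℂ) • σ k ∧
      r = ∑ k, p k * negSum (ptParty E orient (S k) (σ k))}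

theorem sum_mul_negSum_mem_gmeCosts {ι : Type*} [Fintype ι] {S : ι → Finset V} {p : ι → ℝ}
    {σ : ι → Matrix (E → Fin d × Fin d) (E → Fin d × Fin d) ℂ}
    (hS : ∀ k, (cutEdges orient (S k)).Nonempty) (hp : ∀ k, 0 ≤ p k) (hσ : ∀ k, IsState (σ k)) :
    ∑ k, p k * negSum (ptParty E orient (S k) (σ k)) ∈ gmeCosts orient (∑ k, p k • σ k) := by
  let φ := (Fintype.equivFin ι).symm
  refine ⟨Fintype.card ι, S ∘ φ, p ∘ φ, σ ∘ φ, fun k => ?_, fun k => ?_, fun k => hp _,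
    fun k => hσ _, (φ.sum_comp fun k => p k • σ k).symm,
    (φ.sum_comp fun k => p k * negSum (ptParty E orient (S k) (σ k))).symm⟩
  all_goals obtain ⟨e, he⟩ := hS (φ k)
  · rw [nonempty_iff_ne_empty]
    rintro h
    simp [mem_cutEdges, show S (φ k) = ∅ from h] at he
  · rintro h
    simp [mem_cutEdges, show S (φ k) = univ from h] at he

theorem max_zero_neg_re_trace_WE_mul_le [NeZero d]
    (hcut : ∀ S : Finset V, S.Nonempty → S ≠ univ → (cutEdges orient S).Nonempty)
    {r : ℝ} (hr : r ∈ gmeCosts orient ρ) : max 0 (-(WE d E * ρ).trace.re) ≤ r := by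
  obtain ⟨m, S, p, σ, hS₀, hS₁, hp, hσ, rfl, rfl⟩ := hr
  refine max_le (sum_nonneg fun k _ => mul_nonneg (hp k) (negSum_nonneg _)) ?_
  rw [Matrix.mul_sum, trace_sum, Complex.re_sum, ← sum_neg_distrib]
  refine sum_le_sum fun k _ => ?_
  rw [mul_smul_comm, trace_smul, smul_eq_mul, Complex.re_ofReal_mul, ← mul_neg]
  exact mul_le_mul_of_nonneg_left
    (neg_re_trace_WE_mul_le_negSum (hcut _ (hS₀ k) (hS₁ k)) (hσ k).1.nonneg) (hp k)

/-- The weights that express `∑ B, w B • defectState d B` through the states `pptState d t B`: every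
`B ≠ ∅` draws `t * w B * pptThreshold d B` from the weight of `defectState d ∅`. -/
noncomputable def pptWeight (d : ℕ) (w : Finset E → ℝ) (t : ℝ) (B : Finset E) : ℝ :=
  if B = ∅ then w ∅ - t * ∑ B ∈ univ.erase ∅, w B * pptThreshold d B
  else w B * (1 + t * pptThreshold d B)

variable [d.AtLeastTwo]

theorem sum_pptWeight_smul_pptState (w : Finset E → ℝ) {t : ℝ} (ht : 0 ≤ t) :
    ∑ B, pptWeight d w t B • pptState d t B = ∑ B, w B • defectState d B := by
  have hrest : ∀ B ∈ univ.erase (∅ : Finset E), pptWeight d w t B • pptState d t B =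
      w B • defectState d B + (t * (w B * pptThreshold d B)) • defectState d ∅ := by
    intro B hB
    rw [pptWeight, if_neg (ne_of_mem_erase hB), pptState, mul_smul,
      smul_inv_smul₀ (one_add_mul_pptThreshold_pos ht B).ne']
    module
  rw [← add_sum_erase _ _ (mem_univ ∅), ← add_sum_erase univ _ (mem_univ ∅), sum_congr rfl hrest,
    pptWeight, if_pos rfl, pptState_empty ht, sum_add_distrib, ← sum_smul, ← mul_sum]
  module

theorem exists_mem_gmeCosts_sum_smul_defectState_le [Nonempty E]
    (hsurj : Function.Surjective (cutEdges orient)) {w : Finset E → ℝ} (hw : ∀ B, 0 ≤ w B) :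
    ∃ r ∈ gmeCosts orient (∑ B, w B • defectState d B),
      r ≤ max 0 (-(WE d E * ∑ B, w B • defectState d B).trace.re) := by
  obtain ⟨e₀⟩ := ‹Nonempty E›
  choose S hS using hsurj
  obtain ⟨t, ⟨ht₀, ht₁⟩, ht⟩ := exists_mem_Icc_sub_mul_eq_max
    (c := ∑ B ∈ univ.erase ∅, w B * pptThreshold d B) (hw ∅)
  have hweight_empty : pptWeight d w t ∅ =
      max 0 (w ∅ - ∑ B ∈ univ.erase ∅, w B * pptThreshold d B) := ht
  have hweight (B : Finset E) : 0 ≤ pptWeight d w t B := by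
    obtain rfl | hB := eq_or_ne B ∅
    · exact hweight_empty ▸ le_max_left _ _
    · rw [pptWeight, if_neg hB]
      exact mul_nonneg (hw B) (one_add_mul_pptThreshold_pos ht₀ B).le
  have hcut (B : Finset E) : (cutEdges orient (S (if B = ∅ then {e₀} else B))).Nonempty := by
    rw [hS]
    split_ifs with hB
    exacts [singleton_nonempty _, nonempty_iff_ne_empty.2 hB]
  have hppt (B : Finset E) : negSum (ptParty E orient (S B) (pptState d t B)) = 0 :=
    negSum_eq_zero_of_nonneg
      (by simpa only [hS B] using ptParty_pptState_nonneg (orient := orient) (S := S B) ht₀ ht₁)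
  have hmem := sum_mul_negSum_mem_gmeCosts hcut hweight fun B => isState_pptState (d := d) ht₀ B
  rw [sum_pptWeight_smul_pptState w ht₀] at hmem
  refine ⟨_, hmem, ?_⟩
  rw [Fintype.sum_eq_single ∅ fun B hB => by rw [if_neg hB, hppt, mul_zero], if_pos rfl,
    pptState_empty ht₀, neg_re_trace_WE_mul_sum_smul_defectState, ← mul_zero ((d - 1) / 2 : ℝ),
    ← mul_max_of_nonneg _ _ (half_pos (sub_pos.2 one_lt_cast_of_atLeastTwo)).le, ← hweight_empty,
    mul_comm]
  exact mul_le_mul_of_nonneg_right (negSum_ptParty_defectState_empty_le (hS {e₀})) (hweight ∅)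

theorem GMEnegNet_sum_smul_defectState [Nonempty E]
    (hcut : ∀ S : Finset V, S.Nonempty → S ≠ univ → (cutEdges orient S).Nonempty)
    (hsurj : Function.Surjective (cutEdges orient)) {w : Finset E → ℝ} (hw : ∀ B, 0 ≤ w B) :
    GMEnegNet d E orient (∑ B, w B • defectState d B) =
      max 0 (-(WE d E * ∑ B, w B • defectState d B).trace.re) := by
  obtain ⟨r, hr, hle⟩ := exists_mem_gmeCosts_sum_smul_defectState_le (d := d) hsurj hw
  have hlower : max 0 (-(WE d E * ∑ B, w B • defectState d B).trace.re) ∈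
      lowerBounds (gmeCosts orient (∑ B, w B • defectState d B)) :=
    fun _ => max_zero_neg_re_trace_WE_mul_le hcut
  exact (csInf_le_of_le ⟨_, hlower⟩ hr hle).antisymm (le_csInf ⟨r, hr⟩ hlower)

end OptimalDecomposition

section TreeCuts

variable {V E : Type*} [DecidableEq V] [Fintype E] {orient : E → V × V}

theorem cutEdges_empty : cutEdges orient ∅ = ∅ := by
  simp [cutEdges]

theorem cutEdges_symmDiff [DecidableEq E] (S T : Finset V) :
    cutEdges orient (symmDiff S T) = symmDiff (cutEdges orient S) (cutEdges orient T) := by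
  ext e
  simp only [mem_symmDiff, mem_cutEdges]
  tauto

theorem surjective_cutEdges_of_forall_singleton
    (h : ∀ e : E, ∃ S : Finset V, cutEdges orient S = {e}) :
    Function.Surjective (cutEdges orient) := by
  intro B
  induction B using Finset.induction_on with
  | empty => exact ⟨∅, cutEdges_empty⟩
  | insert e B he ih =>
    obtain ⟨S, hS⟩ := ih
    obtain ⟨T, hT⟩ := h e
    refine ⟨symmDiff T S, ?_⟩
    rw [cutEdges_symmDiff, hT, hS, (disjoint_singleton_left.2 he).symmDiff_eq_sup, sup_eq_union,
      insert_eq]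

variable {G : SimpleGraph V} [Fintype ↥G.edgeSet] {orient : ↥G.edgeSet → V × V}

theorem cutEdges_nonempty_of_connected [Fintype V] (hG : G.Connected)
    (horient : ∀ e : ↥G.edgeSet, e.val = s((orient e).1, (orient e).2)) {S : Finset V}
    (hS₀ : S.Nonempty) (hS₁ : S ≠ univ) : (cutEdges orient S).Nonempty := by
  obtain ⟨u, hu⟩ := hS₀
  obtain ⟨v, hv⟩ : ∃ v, v ∉ S := by simpa [eq_univ_iff_forall] using hS₁
  obtain ⟨walk⟩ := hG.preconnected u v
  obtain ⟨a, -, hfst, hsnd⟩ := walk.exists_boundary_dart (↑S) hu hv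
  refine ⟨⟨s(a.fst, a.snd), a.adj⟩, mem_cutEdges.2 ?_⟩
  rw [mem_coe] at hfst hsnd
  obtain ⟨h₁, h₂⟩ | ⟨h₁, h₂⟩ := Sym2.eq_iff.1 (horient ⟨s(a.fst, a.snd), a.adj⟩) <;>
    simp [← h₁, ← h₂, hfst, hsnd]

theorem exists_cutEdges_eq_singleton_of_isAcyclic [Finite V] (hG : G.IsAcyclic)
    (horient : ∀ e : ↥G.edgeSet, e.val = s((orient e).1, (orient e).2)) (e : ↥G.edgeSet) :
    ∃ S : Finset V, cutEdges orient S = {e} := by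
  cases nonempty_fintype V
  have hbridge : ¬(G.deleteEdges {e.val}).Reachable (orient e).1 (orient e).2 := by
    have h := SimpleGraph.isAcyclic_iff_forall_isBridge.1 hG e.2
    rwa [horient e, SimpleGraph.isBridge_iff, ← horient e] at h
  have hadj {f : ↥G.edgeSet} (hf : f ≠ e) :
      (G.deleteEdges {e.val}).Adj (orient f).1 (orient f).2 := by
    rw [SimpleGraph.deleteEdges_adj, ← SimpleGraph.mem_edgeSet, ← horient f]
    exact ⟨f.2, fun h => hf (Subtype.ext h)⟩
  refine ⟨univ.filter fun v => (G.deleteEdges {e.val}).Reachable (orient e).1 v, ?_⟩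
  ext f
  rw [mem_cutEdges, mem_singleton, mem_filter_univ, mem_filter_univ]
  obtain rfl | hf := eq_or_ne f e
  · simp [hbridge]
  · have hreach : (G.deleteEdges {e.val}).Reachable (orient e).1 (orient f).1 ↔
        (G.deleteEdges {e.val}).Reachable (orient e).1 (orient f).2 :=
      ⟨fun h => h.trans (hadj hf).reachable, fun h => h.trans (hadj hf).symm.reachable⟩
    simp [hreach, hf]

end TreeCuts

section IsotropicState

/-- The overlap of the isotropic state `p Φ + ((1 - p) / d²) I` with the maximally entangled
state. -/
noncomputable def isotropicFidelity (d : ℕ) (p : ℝ) : ℝ := p + (1 - p) / (d : ℝ) ^ 2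

variable {d : ℕ}

theorem isotropicFidelity_mem_Icc [NeZero d] {p : ℝ} (hp₀ : 0 ≤ p) (hp₁ : p ≤ 1) :
    isotropicFidelity d p ∈ Set.Icc 0 1 := by
  have hd : (1 : ℝ) ≤ (d : ℝ) ^ 2 := one_le_pow₀ (Nat.one_le_cast.2 NeZero.one_le)
  have hp : 0 ≤ 1 - p := sub_nonneg.2 hp₁
  have hle : (1 - p) / (d : ℝ) ^ 2 ≤ 1 - p := div_le_self hp hd
  exact ⟨by rw [isotropicFidelity]; positivity, by rw [isotropicFidelity]; linarith⟩

variable [d.AtLeastTwo]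

theorem isotropic_eq_smul_phiPerpState_add_smul_phiM (p : ℝ) :
    (p : ℂ) • phiM d + ((1 - (p : ℂ)) / (d : ℂ) ^ 2) • 1 =
      (1 - isotropicFidelity d p) • phiPerpState d + isotropicFidelity d p • phiM d := by
  have hd₀ : (d : ℝ) ≠ 0 := NeZero.ne _
  have hd₁ : (d : ℝ) ^ 2 - 1 ≠ 0 := sq_sub_one_pos_of_atLeastTwo.ne'
  have hscalar : (1 - (p : ℂ)) / (d : ℂ) ^ 2 = ((1 - p) / (d : ℝ) ^ 2 : ℝ) := by push_cast; rfl
  rw [hscalar, Complex.coe_smul, Complex.coe_smul, phiPerpState, isotropicFidelity]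
  match_scalars <;> field_simp <;> ring

theorem ipen_eq_sum_smul_defectState (E : Type*) [Fintype E] [DecidableEq E] (p : ℝ) :
    ipen d E p = ∑ B : Finset E,
      ((1 - isotropicFidelity d p) ^ #B * isotropicFidelity d p ^ #Bᶜ) • defectState d B := by
  have hipen : ipen d E p = matrixTensor ℝ fun _ =>
      (1 - isotropicFidelity d p) • phiPerpState d + isotropicFidelity d p • phiM d := by
    simp only [← isotropic_eq_smul_phiPerpState_add_smul_phiM]
    rfl
  rw [hipen]
  refine (matrixTensor_smul_add_smul (fun _ : E => 1 - isotropicFidelity d p)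
    (fun _ => isotropicFidelity d p) (fun _ => phiPerpState d) fun _ => phiM d).trans ?_
  simp only [defectState, prod_piecewise, univ_inter, ← compl_eq_univ_sdiff, prod_const]

end IsotropicState

theorem stmt_15_general {d : ℕ} [d.AtLeastTwo] {V : Type*} [Fintype V] [DecidableEq V]
    {G : SimpleGraph V} [Fintype ↥G.edgeSet] (hG : G.IsTree) (hE : G.edgeSet.Nonempty)
    {orient : ↥G.edgeSet → V × V}
    (horient : ∀ e : ↥G.edgeSet, e.val = s((orient e).1, (orient e).2))
    {w : Finset ↥G.edgeSet → ℝ} (hw : ∀ B, 0 ≤ w B) :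
    GMEnegNet d ↥G.edgeSet orient (∑ B, w B • defectState d B) =
      max 0 (-(WE d ↥G.edgeSet * ∑ B, w B • defectState d B).trace.re) := by
  have : Nonempty ↥G.edgeSet := hE.to_subtype
  exact GMEnegNet_sum_smul_defectState
    (fun _ => cutEdges_nonempty_of_connected hG.connected horient)
    (surjective_cutEdges_of_forall_singleton
      (exists_cutEdges_eq_singleton_of_isAcyclic hG.isAcyclic horient)) hw

/-- GME negativity of the isotropic pair-entangled state on a tree network:
`N(ρ) = max {0, −Tr(W_E ρ)}`. -/
theorem stmt_15 (d : ℕ) (hd : 2 ≤ d) {V : Type*} [Fintype V] [DecidableEq V]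
    (G : SimpleGraph V) [DecidableRel G.Adj]
    (hconn : G.Connected) (hacyc : G.IsAcyclic) (hE : G.edgeSet.Nonempty)
    (orient : ↥G.edgeSet → V × V)
    (horient : ∀ e : ↥G.edgeSet, e.val = s((orient e).1, (orient e).2))
    (p : ℝ) (hp0 : 0 ≤ p) (hp1 : p ≤ 1) :
    GMEnegNet d ↥G.edgeSet orient (ipen d ↥G.edgeSet p)
      = max 0 (-((WE d ↥G.edgeSet * ipen d ↥G.edgeSet p).trace.re)) := by
  have : d.AtLeastTwo := ⟨hd⟩
  obtain ⟨hf₀, hf₁⟩ := isotropicFidelity_mem_Icc (d := d) hp0 hp1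
  rw [ipen_eq_sum_smul_defectState]
  exact stmt_15_general ⟨hconn, hacyc⟩ hE horient fun B =>
    mul_nonneg (pow_nonneg (sub_nonneg.2 hf₁) _) (pow_nonneg hf₀ _)
end

section
/- Vanishing of the cut-weight sum for highly connected networks: let c > 1/2 be a real number and 0 ≤ x < 1. For each m, let G_m be a finite simple graph on n_m vertices in which every vertex has degree at least c·n_m, and suppose n_m → ∞ as m → ∞. Then Σ_{K ∈ B(G_m), K ≠ ∅} x^{|K|} → 0 as m → ∞. -/
open Finset Filter

/-- The edge boundary `∂S` of a vertex subset `S`, as a finite set of edges of `G`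
(the edges with exactly one endpoint in `S`). -/
def bdF {V : Type*} [Fintype V] [DecidableEq V] (G : SimpleGraph V) [DecidableRel G.Adj]
    (S : Finset V) : Finset (Sym2 V) :=
  G.edgeFinset.filter (fun e => (S.filter (fun v => v ∈ e)).card = 1)

/-- The cut space `B(G)`: the collection of all edge boundaries `∂S` for `S ⊆ V`. -/
def cutSpaceF {V : Type*} [Fintype V] [DecidableEq V] (G : SimpleGraph V)
    [DecidableRel G.Adj] : Finset (Finset (Sym2 V)) :=
  Finset.univ.filter (fun K => ∃ S : Finset V, K = bdF G S)

/-!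
Since `∂S = ∂Sᶜ`, every nonempty cut is `∂S` for some nonempty `S` with at most half of the `n`
vertices. If all degrees are at least `n / 2 + D`, each vertex of such an `S` has at least `D`
neighbours outside `S`, so `|∂S| ≥ D |S|`. By the binomial theorem the sum is then at most
`∑_{S ≠ ∅} (x ^ D) ^ |S| = (1 + x ^ D) ^ n - 1`, which tends to `0` as soon as `n * x ^ D` does.
When the degrees are at least `c * n` with `c > 1 / 2`, this applies to `D = ⌊(c - 1 / 2) * n⌋`.
-/

section EdgeBoundary

variable {V : Type*} [DecidableEq V]

lemma card_filter_mem_sym2_eq_one_iff (S : Finset V) {a b : V} (hab : a ≠ b) :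
    #{v ∈ S | v ∈ s(a, b)} = 1 ↔ (a ∈ S ↔ b ∉ S) := by
  have filter_eq_inter : {v ∈ S | v ∈ s(a, b)} = {a, b} ∩ S := by
    ext v
    simp [and_comm]
  rw [filter_eq_inter]
  by_cases ha : a ∈ S <;> by_cases hb : b ∈ S <;>
    simp [ha, hb, hab, insert_inter_of_mem, insert_inter_of_notMem]

variable [Fintype V] (G : SimpleGraph V) [DecidableRel G.Adj]

lemma mk_mem_bdF_iff {S : Finset V} {a b : V} :
    s(a, b) ∈ bdF G S ↔ G.Adj a b ∧ (a ∈ S ↔ b ∉ S) := by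
  simp only [bdF, mem_filter, SimpleGraph.mem_edgeFinset, SimpleGraph.mem_edgeSet]
  exact and_congr_right fun hadj => card_filter_mem_sym2_eq_one_iff S hadj.ne

lemma bdF_compl (S : Finset V) : bdF G Sᶜ = bdF G S := by
  ext ⟨a, b⟩
  simp only [mk_mem_bdF_iff, mem_compl]
  tauto

lemma bdF_empty : bdF G ∅ = ∅ := by
  ext ⟨a, b⟩
  simp [mk_mem_bdF_iff]

lemma card_bdF (S : Finset V) : #(bdF G S) = ∑ v ∈ S, #(G.neighborFinset v \ S) := by
  rw [← card_sigma]
  refine (card_nbij (fun p => s(p.1, p.2)) ?_ ?_ ?_).symm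
  · rintro ⟨a, b⟩ hab
    simp only [mem_coe, mem_sigma, Finset.mem_sdiff, SimpleGraph.mem_neighborFinset] at hab
    simp only [mem_coe, mk_mem_bdF_iff]
    tauto
  · rintro ⟨a, b⟩ hab ⟨a', b'⟩ hab' heq
    simp only [mem_coe, mem_sigma, Finset.mem_sdiff] at hab hab'
    obtain ⟨rfl, rfl⟩ | ⟨rfl, rfl⟩ := Sym2.eq_iff.mp heq
    · rfl
    · exact absurd hab.1 hab'.2.2
  · rintro ⟨a, b⟩ hab
    obtain ⟨hadj, hcross⟩ := (mk_mem_bdF_iff G).mp hab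
    by_cases ha : a ∈ S
    · exact ⟨⟨a, b⟩, by simp [ha, hcross.mp ha, hadj], rfl⟩
    · have hb : b ∈ S := by tauto
      exact ⟨⟨b, a⟩, by simp [ha, hb, hadj.symm], Sym2.eq_swap⟩

lemma card_mul_le_card_bdF {S : Finset V} {D : ℕ} (hS : 2 * #S ≤ Fintype.card V)
    (hdeg : ∀ v ∈ S, Fintype.card V + 2 * D ≤ 2 * G.degree v) :
    #S * D ≤ #(bdF G S) := by
  rw [card_bdF, ← smul_eq_mul]
  refine card_nsmul_le_sum _ _ _ fun v hv => ?_
  have hdeg_le : G.degree v ≤ #(G.neighborFinset v \ S) + #S := card_le_card_sdiff_add_card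
  have := hdeg v hv
  lia

end EdgeBoundary

lemma sum_erase_empty_pow_card {R : Type*} [CommRing R] (V : Type*) [Fintype V] [DecidableEq V]
    (y : R) :
    ∑ S ∈ univ.erase (∅ : Finset V), y ^ #S = (1 + y) ^ Fintype.card V - 1 := by
  have sum_all : ∑ S : Finset V, y ^ #S = (1 + y) ^ Fintype.card V := by
    simpa [add_comm] using Fintype.sum_pow_mul_eq_add_pow V y 1
  rw [sum_erase_eq_sub (mem_univ _), sum_all, card_empty, pow_zero]

section CutWeight

variable {V : Type*} [Fintype V] [DecidableEq V] (G : SimpleGraph V) [DecidableRel G.Adj]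

lemma exists_bdF_eq_of_mem_cutSpaceF {K : Finset (Sym2 V)} (hK : K ∈ cutSpaceF G)
    (hne : K.Nonempty) :
    ∃ S : Finset V, S ≠ ∅ ∧ 2 * #S ≤ Fintype.card V ∧ bdF G S = K := by
  obtain ⟨S, rfl⟩ : ∃ S, K = bdF G S := by simpa [cutSpaceF] using hK
  have ne_empty {T : Finset V} (hT : bdF G T = bdF G S) : T ≠ ∅ := by
    rintro rfl
    exact hne.ne_empty (hT.symm.trans (bdF_empty G))
  by_cases hS : 2 * #S ≤ Fintype.card V
  · exact ⟨S, ne_empty rfl, hS, rfl⟩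
  · have hcompl : 2 * #Sᶜ ≤ Fintype.card V := by
      rw [card_compl]
      lia
    exact ⟨Sᶜ, ne_empty (bdF_compl G S), hcompl, bdF_compl G S⟩

lemma sum_cutSpaceF_pow_card_le {x : ℝ} (hx0 : 0 ≤ x) (hx1 : x ≤ 1) {D : ℕ}
    (hdeg : ∀ v, Fintype.card V + 2 * D ≤ 2 * G.degree v) :
    ∑ K ∈ cutSpaceF G with K.Nonempty, x ^ #K ≤ (1 + x ^ D) ^ Fintype.card V - 1 := by
  set small : Finset (Finset V) := {S ∈ univ.erase ∅ | 2 * #S ≤ Fintype.card V}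
  have cuts_subset : {K ∈ cutSpaceF G | K.Nonempty} ⊆ small.image (bdF G) := by
    intro K hK
    obtain ⟨S, hne, hcard, rfl⟩ :=
      exists_bdF_eq_of_mem_cutSpaceF G (mem_filter.mp hK).1 (mem_filter.mp hK).2
    exact mem_image_of_mem _ (by simp [small, hne, hcard])
  have weight_le : ∀ S ∈ small, x ^ #(bdF G S) ≤ (x ^ D) ^ #S := by
    intro S hS
    rw [← pow_mul, mul_comm]
    exact pow_le_pow_of_le_one hx0 hx1
      (card_mul_le_card_bdF G (mem_filter.mp hS).2 fun v _ => hdeg v)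
  calc ∑ K ∈ cutSpaceF G with K.Nonempty, x ^ #K
      ≤ ∑ K ∈ small.image (bdF G), x ^ #K :=
        sum_le_sum_of_subset_of_nonneg cuts_subset fun _ _ _ => by positivity
    _ ≤ ∑ S ∈ small, x ^ #(bdF G S) := sum_image_le_of_nonneg fun _ _ => by positivity
    _ ≤ ∑ S ∈ small, (x ^ D) ^ #S := sum_le_sum weight_le
    _ ≤ ∑ S ∈ univ.erase ∅, (x ^ D) ^ #S :=
        sum_le_sum_of_subset_of_nonneg (filter_subset _ _) fun _ _ _ => by positivity
    _ = (1 + x ^ D) ^ Fintype.card V - 1 := sum_erase_empty_pow_card V _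

end CutWeight

section Limits

variable {ι : Type*} {l : Filter ι} {n : ι → ℕ}

lemma tendsto_one_add_pow_sub_one {y : ι → ℝ} (h : Tendsto (fun i => n i * y i) l (nhds 0)) :
    Tendsto (fun i => (1 + y i) ^ n i - 1) l (nhds 0) := by
  have exp_bound : ∀ i, ‖(1 + y i) ^ n i - 1‖ ≤ Real.exp ‖n i * y i‖ - 1 := fun i => by
    simpa using (range (n i)).norm_prod_one_add_sub_one_le fun _ => y i
  have exp_tendsto : Tendsto (fun i => Real.exp ‖n i * y i‖ - 1) l (nhds 0) := by
    simpa using ((Real.continuous_exp.tendsto _).comp h.norm).sub_const 1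
  exact squeeze_zero_norm exp_bound exp_tendsto

lemma tendsto_mul_pow_floor {d x : ℝ} (hd : 0 < d) (hx0 : 0 ≤ x) (hx1 : x < 1)
    (hn : Tendsto (fun i => (n i : ℝ)) l atTop) :
    Tendsto (fun i => n i * x ^ ⌊d * n i⌋₊) l (nhds 0) := by
  have floor_tendsto : Tendsto (fun i => ⌊d * n i⌋₊) l atTop :=
    tendsto_nat_floor_atTop.comp (hn.const_mul_atTop hd)
  have succ_mul_pow : Tendsto (fun k : ℕ => d⁻¹ * ((k + 1) * x ^ k)) atTop (nhds 0) := by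
    simpa [add_mul] using ((tendsto_self_mul_const_pow_of_lt_one hx0 hx1).add
      (tendsto_pow_atTop_nhds_zero_of_lt_one hx0 hx1)).const_mul d⁻¹
  refine squeeze_zero (fun i => by positivity) (fun i => ?_) (succ_mul_pow.comp floor_tendsto)
  have le_inv_mul_floor : (n i : ℝ) ≤ d⁻¹ * (⌊d * n i⌋₊ + 1) := by
    rw [le_inv_mul_iff₀ hd]
    exact (Nat.lt_floor_add_one _).le
  rw [Function.comp_apply, ← mul_assoc]
  gcongr

end Limits

lemma add_two_mul_floor_le_two_mul {c : ℝ} (hc : 1 / 2 ≤ c) {n d : ℕ} (h : c * n ≤ d) :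
    n + 2 * ⌊(c - 1 / 2) * n⌋₊ ≤ 2 * d := by
  have floor_le : (⌊(c - 1 / 2) * n⌋₊ : ℝ) ≤ (c - 1 / 2) * n :=
    Nat.floor_le (mul_nonneg (sub_nonneg.mpr hc) n.cast_nonneg)
  have : (n + 2 * ⌊(c - 1 / 2) * n⌋₊ : ℝ) ≤ 2 * d := by linarith
  exact_mod_cast this

theorem stmt_18_general {ι : Type*} {l : Filter ι} {x : ℝ} (hx0 : 0 ≤ x) (hx1 : x ≤ 1)
    (V : ι → Type*) [∀ i, Fintype (V i)] [∀ i, DecidableEq (V i)]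
    (G : ∀ i, SimpleGraph (V i)) [∀ i, DecidableRel (G i).Adj] (D : ι → ℕ)
    (hdeg : ∀ i v, Fintype.card (V i) + 2 * D i ≤ 2 * (G i).degree v)
    (hD : Tendsto (fun i => Fintype.card (V i) * x ^ D i) l (nhds 0)) :
    Tendsto (fun i => ∑ K ∈ cutSpaceF (G i) with K.Nonempty, x ^ #K) l (nhds 0) :=
  squeeze_zero (fun _ => sum_nonneg fun _ _ => by positivity)
    (fun i => sum_cutSpaceF_pow_card_le (G i) hx0 hx1 (hdeg i)) (tendsto_one_add_pow_sub_one hD)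

/-- Vanishing of the cut-weight sum for highly connected networks: if
`c > 1/2`, `0 ≤ x < 1`, each graph `G m` on `n m` vertices has minimum degree at least
`c·(n m)`, and `n m → ∞`, then `Σ_{∅ ≠ K ∈ B(G m)} x^{|K|} → 0`. -/
theorem stmt_18 (c : ℝ) (hc : 1 / 2 < c) (x : ℝ) (hx0 : 0 ≤ x) (hx1 : x < 1)
    (V : ℕ → Type*) [∀ m, Fintype (V m)] [∀ m, DecidableEq (V m)]
    (G : ∀ m, SimpleGraph (V m)) [∀ m, DecidableRel (G m).Adj]
    (n : ℕ → ℕ) (hn : ∀ m, Fintype.card (V m) = n m)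
    (hdeg : ∀ m (v : V m), c * n m ≤ (G m).degree v)
    (hinf : Tendsto (fun m => (n m : ℝ)) atTop atTop) :
    Tendsto (fun m =>
        ∑ K ∈ (cutSpaceF (G m)).filter (fun K => K.Nonempty), x ^ K.card)
      atTop (nhds 0) := by
  obtain rfl : (fun m => Fintype.card (V m)) = n := funext hn
  exact stmt_18_general hx0 hx1.le V G _
    (fun m v => add_two_mul_floor_le_two_mul hc.le (hdeg m v))
    (tendsto_mul_pow_floor (sub_pos.mpr hc) hx0 hx1 hinf)
end
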